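/- arXiv:2102.13358 — 2 statements merged into one kernel-verified Lean document; each statement's English description precedes it below -/
import Mathlib

section
/- Let S be a real symmetric traceless 3×3 matrix, and set s = tr(S²) and t = tr(S³). Then S has three pairwise distinct real eigenvalues if and only if 6t² ≠ s³. -/
open Matrix

/-- The discriminant of a cubic with roots `a, b, c` summing to zero, in terms of power sums. -/
lemma pow_sum_three_sub_six_mul_sq {R : Type*} [CommRing R] {a b c : R} (h : a + b + c = 0) :
    (a ^ 2 + b ^ 2 + c ^ 2) ^ 3 - 6 * (a ^ 3 + b ^ 3 + c ^ 3) ^ 2 =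
      2 * ((a - b) * (a - c) * (b - c)) ^ 2 := by
  obtain rfl : c = -a - b := by linear_combination h
  ring

/-- The trace of a power of a Hermitian matrix is the corresponding power sum of eigenvalues. -/
lemma Matrix.IsHermitian.trace_pow_eq_sum_eigenvalues_pow {𝕜 n : Type*} [RCLike 𝕜] [Fintype n]
    [DecidableEq n] {A : Matrix n n 𝕜} (hA : A.IsHermitian) (k : ℕ) :
    (A ^ k).trace = ∑ i, (hA.eigenvalues i : 𝕜) ^ k := by
  conv_lhs => rw [hA.spectral_theorem, ← map_pow, Unitary.conjStarAlgAut_apply, trace_mul_comm,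
    ← mul_assoc]
  simp [diagonal_pow, trace_diagonal]

theorem distinct_eigenvalues_iff_algebraically_general (S : Matrix (Fin 3) (Fin 3) ℝ)
    (hsymm : S.IsSymm) (hS : S.trace = 0)
    (s t : ℝ) (hs : s = (S ^ 2).trace) (ht : t = (S ^ 3).trace) :
    (∃ a b c : ℝ, a ≠ b ∧ a ≠ c ∧ b ≠ c ∧ S.charpoly.roots = {a, b, c}) ↔
      6 * t ^ 2 ≠ s ^ 3 := by
  have hH : S.IsHermitian := by rwa [IsHermitian, conjTranspose_eq_transpose_of_trivial]
  have hroots : S.charpoly.roots =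
      {hH.eigenvalues 0, hH.eigenvalues 1, hH.eigenvalues 2} := by
    rw [hH.roots_charpoly_eq_eigenvalues]
    rfl
  have hsum : hH.eigenvalues 0 + hH.eigenvalues 1 + hH.eigenvalues 2 = 0 := by
    simpa [Fin.sum_univ_three, hS] using hH.trace_eq_sum_eigenvalues.symm
  have hdisc := pow_sum_three_sub_six_mul_sq hsum
  rw [hH.trace_pow_eq_sum_eigenvalues_pow] at hs ht
  simp only [Fin.sum_univ_three, RCLike.ofReal_real_eq_id, id_eq] at hs ht
  rw [← hs, ← ht] at hdisc
  have hnodup : 6 * t ^ 2 ≠ s ^ 3 ↔ S.charpoly.roots.Nodup := by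
    rw [ne_comm, ← sub_ne_zero, hdisc, hroots]
    simp [sub_eq_zero, and_assoc]
  rw [hnodup]
  constructor
  · rintro ⟨a, b, c, hab, hac, hbc, h⟩
    simp [h, hab, hac, hbc]
  · intro h
    rw [hroots] at h ⊢
    exact ⟨_, _, _, by simp_all, by simp_all, by simp_all, rfl⟩
end

section
/- Let S be a real symmetric traceless 3×3 matrix with s = tr(S²) and t = tr(S³), assume 6t² = s³ and s ≠ 0, and set h = (1/t)·(2S³ − (4/3)·s·S). Then h is symmetric, h² = h, tr(h) = 2, and S·h = h·S = (−t/s)·h. -/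
open Matrix

/-- Cayley–Hamilton for a traceless `3 × 3` matrix, with coefficients written as power traces. -/
theorem Matrix.pow_three_eq_of_trace_eq_zero {K : Type*} [Field K] [CharZero K]
    (S : Matrix (Fin 3) (Fin 3) K) (hS : S.trace = 0) :
    S ^ 3 = ((S ^ 2).trace / 2) • S + ((S ^ 3).trace / 3) • (1 : Matrix (Fin 3) (Fin 3) K) := by
  have h22 : S 2 2 = -S 0 0 - S 1 1 := by
    rw [Matrix.trace_fin_three] at hS
    linear_combination hS
  ext i j
  fin_cases i <;> fin_cases j <;>
    simp [pow_succ, Matrix.trace_fin_three, Matrix.mul_apply, Fin.sum_univ_three, h22] <;>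
    ring

theorem Matrix.IsSymm.eq_zero_of_mul_self_eq_zero {n : Type*} [Fintype n]
    {N : Matrix n n ℝ} (hN : N.IsSymm) (h : N * N = 0) : N = 0 := by
  refine Matrix.conjTranspose_mul_self_eq_zero.mp ?_
  rwa [Matrix.conjTranspose_eq_transpose_of_trivial, hN.eq]

/-- A symmetric real matrix annihilated by `(X - 2a)(X + a)²` is annihilated by
`(X - 2a)(X + a)`. -/
theorem Matrix.IsSymm.sq_eq_of_pow_three_eq {n : Type*} [Fintype n] [DecidableEq n]
    {S : Matrix n n ℝ} (hsymm : S.IsSymm) {a : ℝ}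
    (h3 : S ^ 3 = (3 * a ^ 2) • S + (2 * a ^ 3) • (1 : Matrix n n ℝ)) :
    S * S = a • S + (2 * a ^ 2) • (1 : Matrix n n ℝ) := by
  have hsymm_sub : (S * S - (a • S + (2 * a ^ 2) • (1 : Matrix n n ℝ))).IsSymm := by
    simp [Matrix.IsSymm, Matrix.transpose_mul, hsymm.eq]
  refine sub_eq_zero.mp (hsymm_sub.eq_zero_of_mul_self_eq_zero ?_)
  have h3' : S * (S * S) = (3 * a ^ 2) • S + (2 * a ^ 3) • (1 : Matrix n n ℝ) := by
    rw [← h3]; noncomm_ring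
  simp only [sub_mul, mul_sub, add_mul, mul_add, smul_mul_assoc, mul_smul_comm, mul_one, one_mul,
    mul_assoc, h3']
  module

theorem projector_properties (S : Matrix (Fin 3) (Fin 3) ℝ)
    (hsymm : S.IsSymm) (hS : S.trace = 0)
    (s t : ℝ) (hs : s = (S ^ 2).trace) (ht : t = (S ^ 3).trace)
    (hspec : 6 * t ^ 2 = s ^ 3) (hsne : s ≠ 0)
    (h : Matrix (Fin 3) (Fin 3) ℝ)
    (hdef : h = (1 / t) • ((2 : ℝ) • S ^ 3 - (4 / 3 * s) • S)) :
    h.IsSymm ∧ h * h = h ∧ h.trace = 2 ∧ S * h = h * S ∧ S * h = (-t / s) • h := by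
  have hCH := S.pow_three_eq_of_trace_eq_zero hS
  rw [← hs, ← ht] at hCH
  obtain ⟨a, hta⟩ : ∃ a, t = a * s := ⟨t / s, by field_simp⟩
  have hsa : s = 6 * a ^ 2 := by
    refine mul_left_cancel₀ (pow_ne_zero 2 hsne) ?_
    rw [hta] at hspec
    linear_combination -hspec
  have ha : a ≠ 0 := by
    rintro rfl
    simp [hsa] at hsne
  clear hs ht hspec hsne
  subst hta hsa
  have h3 : S ^ 3 = (3 * a ^ 2) • S + (2 * a ^ 3) • (1 : Matrix (Fin 3) (Fin 3) ℝ) := by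
    rw [hCH]; module
  have hsq := hsymm.sq_eq_of_pow_three_eq h3
  have hlin : h = (2 / 3 : ℝ) • (1 : Matrix (Fin 3) (Fin 3) ℝ) - (1 / (3 * a)) • S := by
    rw [hdef, h3]
    match_scalars <;> field_simp <;> norm_num
  rw [hlin]
  refine ⟨?_, ?_, ?_, ?_, ?_⟩
  · simp [Matrix.IsSymm, hsymm.eq]
  · simp only [sub_mul, mul_sub, smul_mul_assoc, mul_smul_comm, mul_one, one_mul, hsq]
    match_scalars <;> field_simp <;> norm_num
  · simp [Matrix.trace_sub, hS]
  · simp [sub_mul, mul_sub]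
  · simp only [mul_sub, mul_smul_comm, mul_one, hsq]
    match_scalars <;> field_simp <;> norm_num
end
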